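/- arXiv:2203.11434 — 9 statements merged into one kernel-verified Lean document; each statement's English description precedes it below -/
import Mathlib

section
/- Merging two bins cannot increase the Funk distance: let p, q ∈ Δ_{d+1} (points with positive coordinates p_0, p_1, …, p_d summing to 1), and define the coarse-grained points p̃ := (p_0 + p_1, p_2, …, p_d) ∈ Δ_d and q̃ := (q_0 + q_1, q_2, …, q_d) ∈ Δ_d. Then 0 ≤ ρ_FD(p̃, q̃) ≤ ρ_FD(p, q). -/
/-- The open standard simplex: all coordinates positive and summing to 1. -/
def stdSimplexOpen {d : ℕ} (p : Fin d → ℝ) : Prop :=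
  (∀ i, 0 < p i) ∧ ∑ i, p i = 1

/-- The Funk distance ρ_FD(p,q) = log max_i (p_i / q_i). -/
noncomputable def funkDist {d : ℕ} (p q : Fin d → ℝ) : ℝ :=
  Real.log (⨆ i, p i / q i)

/-- Merging the first two bins of a point of the simplex. -/
def mergeBins {d : ℕ} (p : Fin (d + 2) → ℝ) : Fin (d + 1) → ℝ :=
  Fin.cons (p 0 + p 1) (fun i : Fin d => p i.succ.succ)

theorem stdSimplexOpen_mergeBins {d : ℕ} (p : Fin (d + 2) → ℝ)
    (hp : stdSimplexOpen p) : stdSimplexOpen (mergeBins p) := by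
  obtain ⟨h1, h2⟩ := hp
  refine ⟨fun i => ?_, ?_⟩
  · refine Fin.cases ?_ (fun j => ?_) i
    · simpa [mergeBins] using add_pos (h1 0) (h1 1)
    · simpa [mergeBins] using h1 j.succ.succ
  · rw [← h2, Fin.sum_univ_succ, Fin.sum_univ_succ (f := p), Fin.sum_univ_succ]
    simp [mergeBins, add_assoc]

theorem one_le_iSup_ratio {d : ℕ} (p q : Fin d → ℝ)
    (hp : stdSimplexOpen p) (hq : stdSimplexOpen q) : 1 ≤ ⨆ i, p i / q i := by
  have hle : ∀ i, p i ≤ (⨆ i, p i / q i) * q i := fun i =>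
    (div_le_iff₀ (hq.1 i)).1 (le_ciSup (f := fun i => p i / q i) (Set.finite_range _).bddAbove i)
  have h := Finset.sum_le_sum (fun i (_ : i ∈ Finset.univ) => hle i)
  rw [← Finset.mul_sum, hp.2, hq.2, mul_one] at h
  exact h

/-- Merging two bins cannot increase the Funk distance: if `p̃, q̃` are obtained from
`p, q ∈ Δ_{d+1}` by merging their first two coordinates, then
`0 ≤ ρ_FD(p̃, q̃) ≤ ρ_FD(p, q)`. -/
theorem funkDist_mergeBins_le {d : ℕ} (p q : Fin (d + 2) → ℝ)
    (hp : stdSimplexOpen p) (hq : stdSimplexOpen q) :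
    0 ≤ funkDist (mergeBins p) (mergeBins q) ∧
      funkDist (mergeBins p) (mergeBins q) ≤ funkDist p q := by
  have hp' := stdSimplexOpen_mergeBins p hp
  have hq' := stdSimplexOpen_mergeBins q hq
  have h1 := one_le_iSup_ratio _ _ hp' hq'
  refine ⟨Real.log_nonneg h1, Real.log_le_log (by linarith) (ciSup_le fun i => ?_)⟩
  have hle : ∀ i, p i / q i ≤ ⨆ i, p i / q i := fun i =>
    le_ciSup (f := fun i => p i / q i) (Set.finite_range _).bddAbove i
  rw [div_le_iff₀ (hq'.1 i)]
  have hle' : ∀ i, p i ≤ (⨆ i, p i / q i) * q i := fun i =>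
    (div_le_iff₀ (hq.1 i)).1 (hle i)
  refine Fin.cases ?_ (fun j => ?_) i
  · simp only [mergeBins, Fin.cons_zero, mul_add]
    exact add_le_add (hle' 0) (hle' 1)
  · simp only [mergeBins, Fin.cons_succ]
    exact hle' _
end

section
/- Information monotonicity of the Funk distance: let X = {X_1, …, X_m} be a partition of {1, …, d} into m ≤ d nonempty pairwise disjoint subsets, and for p ∈ Δ_d let p_{|X} ∈ Δ_m denote the coarse-grained point with i-th coordinate ∑_{j ∈ X_i} p_j. Then for all p, q ∈ Δ_d, ρ_FD(p_{|X}, q_{|X}) ≤ ρ_FD(p, q). -/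
/-- Information monotonicity of the Funk distance: coarse-graining a point of the simplex
according to a partition `X` of the coordinates into `m ≤ d` nonempty pairwise disjoint
subsets cannot increase the Funk distance. -/
theorem funkDist_information_monotone {d m : ℕ} (hd : 0 < d) (hm : 0 < m) (hmd : m ≤ d)
    (X : Fin m → Finset (Fin d))
    (hne : ∀ i, (X i).Nonempty)
    (hdisj : ∀ i j, i ≠ j → Disjoint (X i) (X j))
    (hcover : ∀ k : Fin d, ∃ i, k ∈ X i)
    (p q : Fin d → ℝ) (hp : stdSimplexOpen p) (hq : stdSimplexOpen q) :
    funkDist (fun i => ∑ j ∈ X i, p j) (fun i => ∑ j ∈ X i, q j) ≤ funkDist p q := by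
  haveI : Nonempty (Fin m) := ⟨⟨0, hm⟩⟩
  have hP : ∀ i, 0 < ∑ j ∈ X i, p j := fun i => Finset.sum_pos (fun j _ => hp.1 j) (hne i)
  have hQ : ∀ i, 0 < ∑ j ∈ X i, q j := fun i => Finset.sum_pos (fun j _ => hq.1 j) (hne i)
  unfold funkDist
  apply Real.log_le_log
  · exact lt_of_lt_of_le (div_pos (hP ⟨0, hm⟩) (hQ ⟨0, hm⟩))
      (le_ciSup (f := fun i => (∑ j ∈ X i, p j) / ∑ j ∈ X i, q j)
        (Set.finite_range _).bddAbove ⟨0, hm⟩)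
  · refine ciSup_le fun i => ?_
    rw [div_le_iff₀ (hQ i), Finset.mul_sum]
    refine Finset.sum_le_sum fun j _ => ?_
    rw [← div_le_iff₀ (hq.1 j)]
    exact le_ciSup (f := fun i => p i / q i) (Set.finite_range _).bddAbove j
end

section
/- Information monotonicity of the Hilbert simplex distance: let X = {X_1, …, X_m} be a partition of {1, …, d} into m ≤ d nonempty pairwise disjoint subsets, and for p ∈ Δ_d let p_{|X} ∈ Δ_m denote the coarse-grained point with i-th coordinate ∑_{j ∈ X_i} p_j. Then for all p, q ∈ Δ_d, ρ_HG(p_{|X}, q_{|X}) ≤ ρ_HG(p, q). -/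
/-- The Hilbert simplex distance ρ_HG(p,q) = ρ_FD(p,q) + ρ_FD(q,p). -/
noncomputable def hilbertDist {d : ℕ} (p q : Fin d → ℝ) : ℝ :=
  funkDist p q + funkDist q p

theorem funkDist_coarse_le {d m : ℕ} (hm : 0 < m) (X : Fin m → Finset (Fin d))
    (hne : ∀ i, (X i).Nonempty) (p q : Fin d → ℝ) (hp : ∀ i, 0 < p i) (hq : ∀ i, 0 < q i) :
    funkDist (fun i => ∑ j ∈ X i, p j) (fun i => ∑ j ∈ X i, q j) ≤ funkDist p q := by
  unfold funkDist
  haveI : Nonempty (Fin m) := ⟨⟨0, hm⟩⟩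
  have hP : ∀ i, 0 < ∑ j ∈ X i, p j := fun i => Finset.sum_pos (fun j _ => hp j) (hne i)
  have hQ : ∀ i, 0 < ∑ j ∈ X i, q j := fun i => Finset.sum_pos (fun j _ => hq j) (hne i)
  apply Real.log_le_log
  · exact lt_of_lt_of_le (div_pos (hP ⟨0, hm⟩) (hQ ⟨0, hm⟩))
      (le_ciSup (f := fun i => (∑ j ∈ X i, p j) / ∑ j ∈ X i, q j)
        (Set.finite_range _).bddAbove ⟨0, hm⟩)
  · apply ciSup_le
    intro i
    rw [div_le_iff₀ (hQ i), Finset.mul_sum]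
    apply Finset.sum_le_sum
    intro j _
    rw [← div_le_iff₀ (hq j)]
    exact le_ciSup (f := fun i => p i / q i) (Set.finite_range _).bddAbove j

/-- Information monotonicity of the Hilbert simplex distance: coarse-graining a point of the
simplex according to a partition `X` of the coordinates into `m ≤ d` nonempty pairwise
disjoint subsets cannot increase the Hilbert distance. -/
theorem hilbertDist_information_monotone {d m : ℕ} (hd : 0 < d) (hm : 0 < m) (hmd : m ≤ d)
    (X : Fin m → Finset (Fin d))
    (hne : ∀ i, (X i).Nonempty)
    (hdisj : ∀ i j, i ≠ j → Disjoint (X i) (X j))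
    (hcover : ∀ k : Fin d, ∃ i, k ∈ X i)
    (p q : Fin d → ℝ) (hp : stdSimplexOpen p) (hq : stdSimplexOpen q) :
    hilbertDist (fun i => ∑ j ∈ X i, p j) (fun i => ∑ j ∈ X i, q j) ≤ hilbertDist p q := by
  exact add_le_add (funkDist_coarse_le hm X hne p q hp.1 hq.1)
    (funkDist_coarse_le hm X hne q p hq.1 hp.1)
end

section
/- For all p, q in the open standard simplex Δ_d, the Hilbert simplex distance equals the variation norm of the difference of geometric-mean-normalized log-representations: ρ_HG(p, q) = ‖(log(p_1/G(p)), …, log(p_d/G(p))) − (log(q_1/G(q)), …, log(q_d/G(q)))‖_var, where G(p) := (∏_{i=1}^d p_i)^{1/d} is the geometric mean of the coordinates of p. -/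
/-- The Hilbert projective distance ρ_HG(p,q) = log ( max_i (p_i/q_i) / min_j (p_j/q_j) ). -/
noncomputable def hilbertProjDist {d : ℕ} (p q : Fin d → ℝ) : ℝ :=
  Real.log ((⨆ i, p i / q i) / (⨅ j, p j / q j))

/-- The variation norm ‖x‖_var = max_i x_i − min_i x_i. -/
noncomputable def varNorm {d : ℕ} (x : Fin d → ℝ) : ℝ :=
  (⨆ i, x i) - (⨅ i, x i)

/-- The geometric mean of the coordinates of `p`. -/
noncomputable def geomMean {d : ℕ} (p : Fin d → ℝ) : ℝ :=
  (∏ i, p i) ^ ((1 : ℝ) / d)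

/-- The Hilbert simplex distance equals the variation norm of the difference of the
geometric-mean-normalized logarithmic representations. -/
theorem hilbertProjDist_eq_varNorm_log_geomMean {d : ℕ} (hd : 0 < d) (p q : Fin d → ℝ)
    (hp : stdSimplexOpen p) (hq : stdSimplexOpen q) :
    hilbertProjDist p q =
      varNorm ((fun i => Real.log (p i / geomMean p)) -
        (fun i => Real.log (q i / geomMean q))) := by
  obtain ⟨hp, -⟩ := hp
  obtain ⟨hq, -⟩ := hq
  haveI : Nonempty (Fin d) := ⟨⟨0, hd⟩⟩
  have hsup : ∀ (f : Fin d → ℝ) (a : Fin d), (∀ i, f i ≤ f a) → (⨆ i, f i) = f a := by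
    intro f a h
    exact le_antisymm (ciSup_le h) (le_ciSup (Set.finite_range f).bddAbove a)
  have hinf : ∀ (f : Fin d → ℝ) (a : Fin d), (∀ i, f a ≤ f i) → (⨅ i, f i) = f a := by
    intro f a h
    exact le_antisymm (ciInf_le (Set.finite_range f).bddBelow a) (le_ciInf h)
  have hG : ∀ r : Fin d → ℝ, (∀ i, 0 < r i) → 0 < geomMean r := by
    intro r hr
    exact Real.rpow_pos_of_pos (Finset.prod_pos fun i _ => hr i) _
  have hr : ∀ i, 0 < p i / q i := fun i => div_pos (hp i) (hq i)
  have hy : ((fun i => Real.log (p i / geomMean p)) - (fun i => Real.log (q i / geomMean q)))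
      = fun i => Real.log (p i / q i) - (Real.log (geomMean p) - Real.log (geomMean q)) := by
    funext i
    simp only [Pi.sub_apply]
    rw [Real.log_div (hp i).ne' (hG p hp).ne', Real.log_div (hq i).ne' (hG q hq).ne',
      Real.log_div (hp i).ne' (hq i).ne']
    ring
  obtain ⟨a, ha⟩ := Finite.exists_max (fun i => p i / q i)
  obtain ⟨b, hb⟩ := Finite.exists_min (fun i => p i / q i)
  rw [hy]
  unfold hilbertProjDist varNorm
  rw [hsup _ a ha, hinf _ b hb, hsup _ a, hinf _ b, Real.log_div (hr a).ne' (hr b).ne']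
  · ring
  · intro i
    exact sub_le_sub_right (Real.log_le_log (hr b) (hb i)) _
  · intro i
    exact sub_le_sub_right (Real.log_le_log (hr i) (ha i)) _
end

section
/- Isometry of the Hilbert simplex geometry with a normed vector space: the map v : Δ_d → V^d, defined coordinatewise by v(p)_i := log p_i − (1/d) ∑_{j=1}^d log p_j, is a bijection from the open standard simplex Δ_d onto the zero-sum hyperplane V^d := {w ∈ ℝ^d : ∑_i w_i = 0}, with inverse given by the softmax map w ↦ (exp(w_i) / ∑_j exp(w_j))_i; moreover it is an isometry: for all p, q ∈ Δ_d, ρ_HG(p, q) = ‖v(p) − v(q)‖_var. -/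
/-- The centered-log embedding v(p)_i = log p_i − (1/d) ∑_j log p_j. -/
noncomputable def clogMap {d : ℕ} (p : Fin d → ℝ) : Fin d → ℝ :=
  fun i => Real.log (p i) - (1 / (d : ℝ)) * ∑ j, Real.log (p j)

/-- The softmax map w ↦ (exp w_i / ∑_j exp w_j)_i. -/
noncomputable def softmaxMap {d : ℕ} (w : Fin d → ℝ) : Fin d → ℝ :=
  fun i => Real.exp (w i) / ∑ j, Real.exp (w j)

/-- The centered-log map is a bijection from the open standard simplex onto the zero-sum
hyperplane, with inverse the softmax map, and it is an isometry from the Hilbert simplex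
distance to the variation norm. -/
theorem clogMap_isometry_simplex_varNorm {d : ℕ} (hd : 0 < d) :
    (∀ p : Fin d → ℝ, stdSimplexOpen p →
      (∑ i, clogMap p i = 0) ∧ softmaxMap (clogMap p) = p) ∧
    (∀ w : Fin d → ℝ, ∑ i, w i = 0 →
      stdSimplexOpen (softmaxMap w) ∧ clogMap (softmaxMap w) = w) ∧
    (∀ p q : Fin d → ℝ, stdSimplexOpen p → stdSimplexOpen q →
      hilbertProjDist p q = varNorm (clogMap p - clogMap q)) := by
  haveI : Nonempty (Fin d) := ⟨⟨0, hd⟩⟩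
  have hd0 : (d : ℝ) ≠ 0 := by exact_mod_cast hd.ne'
  refine ⟨?_, ?_, ?_⟩
  · rintro p ⟨hp, hs⟩
    constructor
    · simp only [clogMap, Finset.sum_sub_distrib, Finset.sum_const, Finset.card_univ,
        Fintype.card_fin, nsmul_eq_mul]
      field_simp
      ring
    · funext i
      simp only [softmaxMap, clogMap, Real.exp_sub, Real.exp_log (hp _)]
      rw [← Finset.sum_div, hs]
      have := Real.exp_ne_zero (1 / (d : ℝ) * ∑ j, Real.log (p j))
      field_simp
  · intro w hw
    have hS : 0 < ∑ j, Real.exp (w j) :=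
      Finset.sum_pos (fun j _ => Real.exp_pos _) Finset.univ_nonempty
    refine ⟨⟨fun i => div_pos (Real.exp_pos _) hS, ?_⟩, ?_⟩
    · simp only [softmaxMap]
      rw [← Finset.sum_div, div_self hS.ne']
    · funext i
      have h : ∀ j, Real.log (softmaxMap w j) = w j - Real.log (∑ j, Real.exp (w j)) := by
        intro j
        rw [softmaxMap, Real.log_div (Real.exp_ne_zero _) hS.ne', Real.log_exp]
      simp only [clogMap, h, Finset.sum_sub_distrib, Finset.sum_const, Finset.card_univ,
        Fintype.card_fin, nsmul_eq_mul, hw]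
      field_simp
      ring
  · rintro p q ⟨hp, -⟩ ⟨hq, -⟩
    have hpos : ∀ i, 0 < p i / q i := fun i => div_pos (hp i) (hq i)
    obtain ⟨a, ha⟩ := Finite.exists_max (fun i => p i / q i)
    obtain ⟨b, hb⟩ := Finite.exists_min (fun i => p i / q i)
    have hsup : ∀ (f : Fin d → ℝ) (a : Fin d), (∀ i, f i ≤ f a) → (⨆ i, f i) = f a :=
      fun f a h => le_antisymm (ciSup_le h) (le_ciSup (Set.finite_range f).bddAbove a)
    have hinf : ∀ (f : Fin d → ℝ) (a : Fin d), (∀ i, f a ≤ f i) → (⨅ i, f i) = f a :=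
      fun f a h => le_antisymm (ciInf_le (Set.finite_range f).bddBelow a) (le_ciInf h)
    have hv : ∀ i, (clogMap p - clogMap q) i = Real.log (p i / q i) -
        (1 / (d : ℝ) * ∑ j, Real.log (p j) - 1 / (d : ℝ) * ∑ j, Real.log (q j)) := by
      intro i
      rw [Real.log_div (hp i).ne' (hq i).ne']
      simp only [clogMap, Pi.sub_apply]
      ring
    have h1 := hsup (clogMap p - clogMap q) a (fun i => by
      rw [hv, hv]
      exact sub_le_sub_right (Real.log_le_log (hpos i) (ha i)) _)
    have h2 := hinf (clogMap p - clogMap q) b (fun i => by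
      rw [hv, hv]
      exact sub_le_sub_right (Real.log_le_log (hpos b) (hb i)) _)
    rw [hilbertProjDist, varNorm, h1, h2, hsup _ a ha, hinf _ b hb, hv, hv,
      Real.log_div (hpos a).ne' (hpos b).ne']
    ring
end

section
/- Log-sum-exp bounds on the Hilbert simplex distance: for all p, q in the open standard simplex Δ_d, 0 ≤ ρ_HG(p, q) ≤ ρ̃_LSE(p, q) ≤ ρ_HG(p, q) + 2 log d, where ρ̃_LSE(p, q) := log ( (∑_{i=1}^d p_i/q_i) (∑_{i=1}^d q_i/p_i) ). -/
/-- The symmetrized log-sum-exp pseudo-distance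
ρ̃_LSE(p,q) = log ( (∑ i, p_i/q_i) (∑ i, q_i/p_i) ). -/
noncomputable def lseDist {d : ℕ} (p q : Fin d → ℝ) : ℝ :=
  Real.log ((∑ i, p i / q i) * (∑ i, q i / p i))

lemma funk_aux {d : ℕ} (hd : 0 < d) (p q : Fin d → ℝ)
    (hp : ∀ i, 0 < p i) (hq : ∀ i, 0 < q i) :
    (∀ i, p i / q i ≤ ⨆ i, p i / q i) ∧ 0 < (⨆ i, p i / q i) ∧
    (⨆ i, p i / q i) ≤ ∑ i, p i / q i ∧
    ∑ i, p i / q i ≤ d * ⨆ i, p i / q i := by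
  haveI : Nonempty (Fin d) := ⟨⟨0, hd⟩⟩
  have h1 : ∀ i, p i / q i ≤ ⨆ i, p i / q i := fun i =>
    le_ciSup (f := fun i => p i / q i) (Set.finite_range _).bddAbove i
  have hpos : ∀ i, 0 < p i / q i := fun i => div_pos (hp i) (hq i)
  refine ⟨h1, (hpos ⟨0, hd⟩).trans_le (h1 _), ?_, ?_⟩
  · exact ciSup_le fun i =>
      Finset.single_le_sum (f := fun i => p i / q i) (fun j _ => (hpos j).le) (Finset.mem_univ i)
  · calc ∑ i, p i / q i ≤ ∑ _i : Fin d, ⨆ i, p i / q i := Finset.sum_le_sum fun i _ => h1 i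
      _ = d * ⨆ i, p i / q i := by simp

/-- Log-sum-exp bounds on the Hilbert simplex distance:
`0 ≤ ρ_HG(p,q) ≤ ρ̃_LSE(p,q) ≤ ρ_HG(p,q) + 2 log d`. -/
theorem hilbertDist_lse_bounds {d : ℕ} (hd : 0 < d) (p q : Fin d → ℝ)
    (hp : stdSimplexOpen p) (hq : stdSimplexOpen q) :
    0 ≤ hilbertDist p q ∧
    hilbertDist p q ≤ lseDist p q ∧
    lseDist p q ≤ hilbertDist p q + 2 * Real.log d := by
  obtain ⟨a1, a2, a3, a4⟩ := funk_aux hd p q hp.1 hq.1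
  obtain ⟨b1, b2, b3, b4⟩ := funk_aux hd q p hq.1 hp.1
  have hd' : (0 : ℝ) < d := by exact_mod_cast hd
  unfold hilbertDist lseDist funkDist
  rw [← Real.log_mul a2.ne' b2.ne', Real.log_mul (a2.trans_le a3).ne' (b2.trans_le b3).ne']
  refine ⟨Real.log_nonneg ?_, ?_, ?_⟩
  · have hp0 := hp.1 ⟨0, hd⟩
    have hq0 := hq.1 ⟨0, hd⟩
    calc (1 : ℝ) = p ⟨0, hd⟩ / q ⟨0, hd⟩ * (q ⟨0, hd⟩ / p ⟨0, hd⟩) := by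
          field_simp
      _ ≤ _ := mul_le_mul (a1 _) (b1 _) (div_pos hq0 hp0).le a2.le
  · rw [Real.log_mul a2.ne' b2.ne']
    exact add_le_add (Real.log_le_log a2 a3) (Real.log_le_log b2 b3)
  · rw [Real.log_mul a2.ne' b2.ne']
    have h1 := Real.log_le_log (a2.trans_le a3) a4
    have h2 := Real.log_le_log (b2.trans_le b3) b4
    rw [Real.log_mul hd'.ne' a2.ne'] at h1
    rw [Real.log_mul hd'.ne' b2.ne'] at h2
    linarith
end

section
/- Straight line segments are geodesics in Hilbert simplex geometry: for all p, q in the open standard simplex Δ_d and every t ∈ [0, 1], the point r := (1 − t)·p + t·q lies in Δ_d and satisfies ρ_HG(p, q) = ρ_HG(p, r) + ρ_HG(r, q). -/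
theorem hilbertProjDist_eq_of_extremal {d : ℕ} (p q : Fin d → ℝ) (a b : Fin d)
    (ha : ∀ i, p i / q i ≤ p a / q a) (hb : ∀ i, p b / q b ≤ p i / q i) :
    hilbertProjDist p q = Real.log ((p a / q a) / (p b / q b)) := by
  have : Nonempty (Fin d) := ⟨a⟩
  have h1 : (⨆ i, p i / q i) = p a / q a :=
    le_antisymm (ciSup_le ha)
      (le_ciSup (f := fun i => p i / q i) (Set.finite_range _).bddAbove a)
  have h2 : (⨅ i, p i / q i) = p b / q b :=
    le_antisymm (ciInf_le (f := fun i => p i / q i) (Set.finite_range _).bddBelow b)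
      (le_ciInf hb)
  rw [hilbertProjDist, h1, h2]

/-- Straight line segments are geodesics in Hilbert simplex geometry: every convex
combination `r = (1−t)p + tq` lies in the open simplex and satisfies
`ρ_HG(p,q) = ρ_HG(p,r) + ρ_HG(r,q)`. -/
theorem hilbertProjDist_segment_geodesic {d : ℕ} (hd : 0 < d) (p q : Fin d → ℝ)
    (hp : stdSimplexOpen p) (hq : stdSimplexOpen q)
    (t : ℝ) (ht : t ∈ Set.Icc (0 : ℝ) 1) :
    stdSimplexOpen (fun i => (1 - t) * p i + t * q i) ∧
    hilbertProjDist p q =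
      hilbertProjDist p (fun i => (1 - t) * p i + t * q i) +
        hilbertProjDist (fun i => (1 - t) * p i + t * q i) q := by
  obtain ⟨hp0, hp1⟩ := hp
  obtain ⟨hq0, hq1⟩ := hq
  obtain ⟨ht0, ht1⟩ := ht
  have hr0 : ∀ i, 0 < (1 - t) * p i + t * q i := by
    intro i
    rcases ht0.eq_or_lt with h | h
    · subst h
      simpa using hp0 i
    · have h1 := mul_pos h (hq0 i)
      have h2 := mul_nonneg (sub_nonneg.2 ht1) (hp0 i).le
      linarith
  refine ⟨⟨hr0, ?_⟩, ?_⟩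
  · rw [Finset.sum_add_distrib, ← Finset.mul_sum, ← Finset.mul_sum, hp1, hq1]
    ring
  have : Nonempty (Fin d) := ⟨⟨0, hd⟩⟩
  obtain ⟨a, ha⟩ := Finite.exists_max (fun i => p i / q i)
  obtain ⟨b, hb⟩ := Finite.exists_min (fun i => p i / q i)
  have key : ∀ i j, p i / q i ≤ p j / q j →
      p i / ((1 - t) * p i + t * q i) ≤ p j / ((1 - t) * p j + t * q j) ∧
      ((1 - t) * p i + t * q i) / q i ≤ ((1 - t) * p j + t * q j) / q j := by
    intro i j h
    rw [div_le_div_iff₀ (hq0 i) (hq0 j)] at h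
    constructor
    · rw [div_le_div_iff₀ (hr0 i) (hr0 j)]
      have := mul_le_mul_of_nonneg_left h ht0
      linarith
    · rw [div_le_div_iff₀ (hq0 i) (hq0 j)]
      have := mul_le_mul_of_nonneg_left h (sub_nonneg.2 ht1)
      linarith
  rw [hilbertProjDist_eq_of_extremal p q a b ha hb,
    hilbertProjDist_eq_of_extremal p _ a b (fun i => (key i a (ha i)).1)
      (fun i => (key b i (hb i)).1),
    hilbertProjDist_eq_of_extremal _ q a b (fun i => (key i a (ha i)).2)
      (fun i => (key b i (hb i)).2)]
  have pa := hp0 a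
  have pb := hp0 b
  have qa := hq0 a
  have qb := hq0 b
  have ra := hr0 a
  have rb := hr0 b
  beta_reduce
  generalize (1 - t) * p a + t * q a = x at *
  generalize (1 - t) * p b + t * q b = y at *
  rw [← Real.log_mul (by positivity) (by positivity)]
  congr 1
  field_simp
end

section
/- Nonexpansiveness of the Hilbert projective distance under positive linear maps: let A be an m × n real matrix with all entries strictly positive, and let p, q ∈ ℝ^n have all coordinates strictly positive. Then A·p and A·q have all coordinates strictly positive and ρ_HG(A·p, A·q) ≤ ρ_HG(p, q). -/
/-- Nonexpansiveness of the Hilbert projective distance under positive linear maps: if `A`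
is an `m × n` matrix with strictly positive entries and `p, q` have strictly positive
coordinates, then `A·p` and `A·q` have strictly positive coordinates and
`ρ_HG(A·p, A·q) ≤ ρ_HG(p, q)`. -/
theorem hilbertProjDist_mulVec_le {m n : ℕ} (hm : 0 < m) (hn : 0 < n)
    (A : Matrix (Fin m) (Fin n) ℝ) (hA : ∀ i j, 0 < A i j)
    (p q : Fin n → ℝ) (hp : ∀ j, 0 < p j) (hq : ∀ j, 0 < q j) :
    (∀ i, 0 < A.mulVec p i) ∧ (∀ i, 0 < A.mulVec q i) ∧
    hilbertProjDist (A.mulVec p) (A.mulVec q) ≤ hilbertProjDist p q := by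
  have : Nonempty (Fin m) := ⟨⟨0, hm⟩⟩
  have : Nonempty (Fin n) := ⟨⟨0, hn⟩⟩
  have pos : ∀ v : Fin n → ℝ, (∀ j, 0 < v j) → ∀ i, 0 < A.mulVec v i := by
    intro v hv i
    simp only [Matrix.mulVec, dotProduct]
    exact Finset.sum_pos (fun j _ => mul_pos (hA i j) (hv j)) Finset.univ_nonempty
  have hAp := pos p hp
  have hAq := pos q hq
  refine ⟨hAp, hAq, ?_⟩
  unfold hilbertProjDist
  set M := ⨆ i, p i / q i with hM
  set c := ⨅ i, p i / q i with hc
  have hMle : ∀ j, p j / q j ≤ M := fun j => le_ciSup (f := fun j => p j / q j) (Set.finite_range _).bddAbove j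
  have hcle : ∀ j, c ≤ p j / q j := fun j => ciInf_le (f := fun j => p j / q j) (Set.finite_range _).bddBelow j
  have hc0 : 0 < c := by
    obtain ⟨j, hj⟩ := exists_eq_ciInf_of_finite (f := fun j => p j / q j)
    rw [hc, ← hj]
    exact div_pos (hp j) (hq j)
  have h1 : ∀ i, A.mulVec p i / A.mulVec q i ≤ M := by
    intro i
    rw [div_le_iff₀ (hAq i)]
    simp only [Matrix.mulVec, dotProduct, Finset.mul_sum]
    refine Finset.sum_le_sum fun j _ => ?_
    have h := mul_le_mul_of_nonneg_left ((div_le_iff₀ (hq j)).1 (hMle j)) (hA i j).le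
    linarith
  have h2 : ∀ i, c ≤ A.mulVec p i / A.mulVec q i := by
    intro i
    rw [le_div_iff₀ (hAq i)]
    simp only [Matrix.mulVec, dotProduct, Finset.mul_sum]
    refine Finset.sum_le_sum fun j _ => ?_
    have h := mul_le_mul_of_nonneg_left ((le_div_iff₀ (hq j)).1 (hcle j)) (hA i j).le
    linarith
  have hsup : (⨆ i, A.mulVec p i / A.mulVec q i) ≤ M := ciSup_le h1
  have hinf : c ≤ ⨅ i, A.mulVec p i / A.mulVec q i := le_ciInf h2
  have hsup0 : 0 < ⨆ i, A.mulVec p i / A.mulVec q i :=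
    (div_pos (hAp ⟨0, hm⟩) (hAq ⟨0, hm⟩)).trans_le
      (le_ciSup (f := fun i => A.mulVec p i / A.mulVec q i) (Set.finite_range _).bddAbove ⟨0, hm⟩)
  exact Real.log_le_log (div_pos hsup0 (hc0.trans_le hinf))
    (div_le_div₀ (hsup0.le.trans hsup) hsup hc0 hinf)
end

section
/- Geodesics in the Hilbert simplex geometry are not unique: there exist points p, q, r in the open standard simplex Δ_3 such that r does not lie on the straight line segment joining p and q, yet ρ_HG(p, q) = ρ_HG(p, r) + ρ_HG(r, q). -/
lemma hilbertProjDist_eq_aux (p q : Fin 3 → ℝ)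
    (h1 : ∀ i, p i / q i ≤ p 0 / q 0) (h2 : ∀ i, p 1 / q 1 ≤ p i / q i) :
    hilbertProjDist p q = Real.log ((p 0 / q 0) / (p 1 / q 1)) := by
  have a : (⨆ i, p i / q i) = p 0 / q 0 :=
    le_antisymm (ciSup_le h1)
      (le_ciSup (f := fun i => p i / q i) (Set.finite_range _).bddAbove 0)
  have b : (⨅ i, p i / q i) = p 1 / q 1 :=
    le_antisymm (ciInf_le (f := fun i => p i / q i) (Set.finite_range _).bddBelow 1)
      (le_ciInf h2)
  rw [hilbertProjDist, a, b]

/-- Geodesics in the Hilbert simplex geometry are not unique: there are points `p, q, r` of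
the open 2-dimensional simplex with `r` off the straight segment `[p, q]` yet satisfying the
triangle equality `ρ_HG(p,q) = ρ_HG(p,r) + ρ_HG(r,q)`. -/
theorem hilbertProjDist_geodesic_not_unique :
    ∃ p q r : Fin 3 → ℝ, stdSimplexOpen p ∧ stdSimplexOpen q ∧ stdSimplexOpen r ∧
      r ∉ segment ℝ p q ∧
      hilbertProjDist p q = hilbertProjDist p r + hilbertProjDist r q := by
  refine ⟨![4/7, 1/7, 2/7], ![1/3, 1/3, 1/3], ![1/2, 1/4, 1/4], ?_, ?_, ?_, ?_, ?_⟩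
  · exact ⟨fun i => by fin_cases i <;> norm_num, by simp [Fin.sum_univ_three]; norm_num⟩
  · exact ⟨fun i => by fin_cases i <;> norm_num, by simp [Fin.sum_univ_three]; norm_num⟩
  · exact ⟨fun i => by fin_cases i <;> norm_num, by simp [Fin.sum_univ_three]; norm_num⟩
  · rintro ⟨a, b, -, -, hab, h⟩
    have h0 := congrFun h 0
    have h1 := congrFun h 1
    have h2 := congrFun h 2
    simp at h0 h1 h2
    linarith
  · rw [hilbertProjDist_eq_aux, hilbertProjDist_eq_aux, hilbertProjDist_eq_aux,
      ← Real.log_mul]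
    · norm_num
    · norm_num
    · norm_num
    all_goals
      intro i
      fin_cases i <;> norm_num
end
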